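/- Let n ≥ 2, λ > 0, and let X_1,…,X_n be i.i.d. Exponential(λ) random variables. Then τ_n = X̄_n / X_(n) has probability density function f_{τ_n}(t) = (n!/n^{n−1}) · I_{n−1}(n·t − 1) / t^n for t ∈ [1/n, 1], where I_{n−1} denotes the probability density function of the sum of n−1 independent Uniform[0,1] random variables. -/

import Mathlib

open MeasureTheory ProbabilityTheory

/-- The uniform probability measure on `[0, θ]`. -/
noncomputable def uniformMeasure (θ : ℝ) : Measure ℝ :=
  ENNReal.ofReal θ⁻¹ • volume.restrict (Set.Icc 0 θ)

/-- The joint law of an i.i.d. sample of size `n` from `Uniform[0, θ]`. -/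
noncomputable def iidUniform (n : ℕ) (θ : ℝ) : Measure (Fin n → ℝ) :=
  Measure.pi fun _ => uniformMeasure θ

/-- The joint law of an i.i.d. sample of size `n` from `Exponential(r)`. -/
noncomputable def iidExp (n : ℕ) (r : ℝ) : Measure (Fin n → ℝ) :=
  Measure.pi fun _ => expMeasure r

/-- Sample maximum. -/
noncomputable def sampleMax {n : ℕ} (x : Fin n → ℝ) : ℝ := ⨆ i, x i

/-- Empirical mean. -/
noncomputable def sampleMean {n : ℕ} (x : Fin n → ℝ) : ℝ := (∑ i, x i) / n

/-- The mean/max statistic `τ_n`. -/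
noncomputable def tau {n : ℕ} (x : Fin n → ℝ) : ℝ := sampleMean x / sampleMax x

/-- The Irwin–Hall distribution with parameter `m`: the law of the sum of `m`
independent `Uniform[0,1]` random variables. -/
noncomputable def irwinHall (m : ℕ) : Measure ℝ :=
  (iidUniform m 1).map fun u => ∑ i, u i

/-- Tonelli's theorem for a product of functions of the separate coordinates. -/
theorem lintegral_pi_prod {α : Type*} [MeasurableSpace α] {m : ℕ} (μ : Fin m → Measure α)
    [∀ i, SigmaFinite (μ i)] (f : Fin m → α → ENNReal) (hf : ∀ i, Measurable (f i)) :
    ∫⁻ x, ∏ i, f i (x i) ∂Measure.pi μ = ∏ i, ∫⁻ x, f i x ∂μ i := by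
  induction m with
  | zero => simp
  | succ m ih =>
    rw [(measurePreserving_piFinSuccAbove μ 0).symm.lintegral_map_equiv]
    simp_rw [Fin.prod_univ_succ]
    rw [← ih (fun i => μ i.succ) (fun i => f i.succ) (fun i => hf _),
      ← lintegral_prod_mul (hf 0).aemeasurable
        (Finset.measurable_fun_prod _ fun i _ =>
          (hf i.succ).comp (measurable_pi_apply i)).aemeasurable]
    rfl

/-- A product of measures with densities has the product density. -/
theorem pi_withDensity {α : Type*} [MeasurableSpace α] {m : ℕ} (μ : Fin m → Measure α)
    [∀ i, SigmaFinite (μ i)] (f : Fin m → α → ENNReal) (hf : ∀ i, Measurable (f i))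
    [∀ i, SigmaFinite ((μ i).withDensity (f i))] :
    Measure.pi (fun i => (μ i).withDensity (f i)) =
      (Measure.pi μ).withDensity fun x => ∏ i, f i (x i) := by
  refine Measure.pi_eq fun s hs => ?_
  rw [withDensity_apply _ (.univ_pi hs), Measure.restrict_pi_pi, lintegral_pi_prod _ _ hf]
  exact Finset.prod_congr rfl fun i _ => (withDensity_apply _ (hs i)).symm

/-- Integration against a possibly non-measurable density, for a measurable integrand. -/
theorem lintegral_withDensity_of_measurable {α : Type*} [MeasurableSpace α] (μ : Measure α)
    [SFinite μ] (J : α → ENNReal) {G : α → ENNReal} (hG : Measurable G) (hfin : ∀ x, G x ≠ ⊤) :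
    ∫⁻ x, G x ∂μ.withDensity J = ∫⁻ x, G x * J x ∂μ := by
  apply le_antisymm
  · obtain ⟨J', hJ', hle, heq⟩ := exists_measurable_le_withDensity_eq μ J
    rw [← heq, lintegral_withDensity_eq_lintegral_mul _ hJ' hG]
    refine lintegral_mono fun x => ?_
    rw [Pi.mul_apply, mul_comm]
    gcongr
    exact hle x
  · rw [← iSup_lintegral_measurable_le_eq_lintegral]
    refine iSup₂_le fun h hh => iSup_le fun hle => ?_
    have hk : (fun x => h x / G x) ≤ J := fun x =>
      ENNReal.div_le_of_le_mul' (hle x)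
    calc ∫⁻ x, h x ∂μ = ∫⁻ x, ((fun x => h x / G x) * G) x ∂μ := by
          refine lintegral_congr fun x => ?_
          by_cases h0 : G x = 0
          · have := hle x
            simp_all
          · exact (ENNReal.div_mul_cancel h0 (hfin x)).symm
      _ = ∫⁻ x, G x ∂μ.withDensity fun x => h x / G x :=
          (lintegral_withDensity_eq_lintegral_mul _ (hh.div hG) hG).symm
      _ ≤ _ := lintegral_mono' (withDensity_mono (ae_of_all _ hk)) le_rfl

theorem uniformMeasure_one : uniformMeasure 1 = volume.restrict (Set.Icc 0 1) := by
  simp [uniformMeasure]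

theorem ae_mem_Icc_iidUniform (m : ℕ) :
    ∀ᵐ u ∂iidUniform m 1, ∀ i, u i ∈ Set.Icc (0 : ℝ) 1 := by
  rw [iidUniform, uniformMeasure_one, ← Measure.restrict_pi_pi]
  filter_upwards [ae_restrict_mem (.univ_pi fun _ => measurableSet_Icc)] with u hu i
  exact hu i (Set.mem_univ i)

theorem lintegral_eq_ofReal_mul_lintegral_comp_mul_left {y : ℝ} (hy : 0 < y) (f : ℝ → ENNReal) :
    ∫⁻ x, f x = ENNReal.ofReal y * ∫⁻ u, f (y * u) := by
  conv_lhs => rw [← Real.smul_map_volume_mul_left hy.ne']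
  rw [abs_of_pos hy, lintegral_smul_measure]
  congr 1
  exact lintegral_map_equiv f (MeasurableEquiv.mulLeft₀ y hy.ne')

/-- Rescaling the exponential distribution restricted to `(-∞, y]` to the unit interval. -/
theorem expMeasure_restrict_Iic {r y : ℝ} (hy : 0 < y) :
    (expMeasure r).restrict (Set.Iic y) =
      ((uniformMeasure 1).withDensity fun u =>
        ENNReal.ofReal (r * y * Real.exp (-(r * y * u)))).map (y * ·) := by
  ext s hs
  have hs' : MeasurableSet ((y * ·) ⁻¹' s) := hs.preimage (by fun_prop)
  rw [Measure.restrict_apply hs, Measure.map_apply (by fun_prop) hs, withDensity_apply _ hs',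
    uniformMeasure_one, Measure.restrict_restrict hs', expMeasure, gammaMeasure,
    withDensity_apply _ (hs.inter measurableSet_Iic),
    ← lintegral_indicator (hs.inter measurableSet_Iic),
    ← lintegral_indicator (hs'.inter measurableSet_Icc),
    lintegral_eq_ofReal_mul_lintegral_comp_mul_left hy,
    ← lintegral_const_mul' _ _ ENNReal.ofReal_ne_top]
  refine lintegral_congr fun u => ?_
  classical
  have hpdf : gammaPDF 1 r (y * u) = exponentialPDF r (y * u) := rfl
  rw [Set.indicator_apply, Set.indicator_apply, hpdf]
  rcases lt_or_ge u 0 with hu | hu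
  · rw [exponentialPDF_of_neg (mul_neg_of_pos_of_neg hy hu)]
    simp [hu.not_ge]
  · have h1 : y * u ≤ y ↔ u ≤ 1 := by
      constructor <;> intro h <;> nlinarith
    rw [exponentialPDF_of_nonneg (by positivity)]
    simp only [Set.mem_inter_iff, Set.mem_Iic, h1, Set.mem_preimage, Set.mem_Icc, hu, true_and]
    split_ifs
    · rw [← ENNReal.ofReal_mul hy.le]
      congr 1
      ring_nf
    · simp

/-- A scale-invariant form of the Gamma integral. -/
theorem lintegral_exp_mul_pow {r a : ℝ} (hr : 0 < r) (ha : 0 < a) (m : ℕ) :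
    ∫⁻ y, exponentialPDF r y * ENNReal.ofReal ((r * y) ^ m * Real.exp (-(r * y * (a - 1)))) =
      ENNReal.ofReal (m.factorial / a ^ (m + 1)) := by
  have h := lintegral_gammaPDF_eq_one (a := m + 1) (r := r * a) (by positivity) (by positivity)
  rw [← mul_one (ENNReal.ofReal _), ← h, ← lintegral_const_mul' _ _ ENNReal.ofReal_ne_top]
  refine lintegral_congr fun y => ?_
  rcases lt_or_ge y 0 with hy | hy
  · simp [exponentialPDF_of_neg hy, gammaPDF_of_neg hy]
  · rw [exponentialPDF_of_nonneg hy, gammaPDF_of_nonneg hy, ← ENNReal.ofReal_mul (by positivity),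
      ← ENNReal.ofReal_mul (by positivity)]
    congr 1
    have hexp : Real.exp (-(r * a * y)) =
        Real.exp (-(r * y)) * Real.exp (-(r * y * (a - 1))) := by
      rw [← Real.exp_add]
      ring_nf
    have hpow : (r * a) ^ ((m : ℝ) + 1) = (r * a) ^ (m + 1) := by
      exact_mod_cast Real.rpow_natCast (r * a) (m + 1)
    have hm : (m.factorial : ℝ) ≠ 0 := by positivity
    rw [hexp, hpow, Real.Gamma_nat_eq_factorial, add_sub_cancel_right, Real.rpow_natCast]
    field_simp
    ring

theorem iidExp_eq_null {m : ℕ} {r : ℝ} (hr : 0 < r) {i j : Fin (m + 1)} (hij : i ≠ j) :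
    iidExp (m + 1) r {x | x i = x j} = 0 := by
  have := isProbabilityMeasure_expMeasure hr
  have : NullSingletonClass (expMeasure r) := nullSingletonClass_withDensity _
  obtain ⟨k, rfl⟩ := Fin.exists_succAbove_eq hij.symm
  have hmeas : MeasurableSet {p : ℝ × (Fin m → ℝ) | p.2 k = p.1} :=
    measurableSet_eq_fun (by fun_prop) (by fun_prop)
  have hpre : {x : Fin (m + 1) → ℝ | x i = x (i.succAbove k)} =
      MeasurableEquiv.piFinSuccAbove (fun _ => ℝ) i ⁻¹' {p | p.2 k = p.1} := by
    ext x
    exact eq_comm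
  rw [hpre, iidExp, (measurePreserving_piFinSuccAbove (fun _ => expMeasure r) i).measure_preimage
    hmeas.nullMeasurableSet, Measure.measure_prod_null hmeas]
  exact ae_of_all _ fun y => Measure.pi_hyperplane (fun _ => expMeasure r) k y

theorem sampleMax_eq {m : ℕ} {x : Fin (m + 1) → ℝ} {i : Fin (m + 1)} (h : ∀ j, x j ≤ x i) :
    sampleMax x = x i :=
  le_antisymm (ciSup_le h) (le_ciSup (Finite.bddAbove_range x) i)

theorem measurable_tau {n : ℕ} : Measurable (tau : (Fin n → ℝ) → ℝ) := by
  unfold tau sampleMean sampleMax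
  exact Measurable.div (by fun_prop) (Measurable.iSup fun i => measurable_pi_apply i)

/-- The law of the other observations on the event that they are all bounded by `y`, after
rescaling by `y`. -/
theorem iidExp_restrict_le {m : ℕ} {r y : ℝ} (hr : 0 < r) (hy : 0 < y) {B : Set (Fin m → ℝ)}
    (hB : MeasurableSet B) :
    iidExp m r ({z | ∀ j, z j ≤ y} ∩ B) =
      ∫⁻ u, ((y • ·) ⁻¹' B).indicator
        (fun u => ENNReal.ofReal ((r * y) ^ m * Real.exp (-(r * y * ∑ j, u j)))) u
        ∂iidUniform m 1 := by
  have := isProbabilityMeasure_expMeasure hr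
  have : IsFiniteMeasure ((uniformMeasure 1).withDensity fun u =>
      ENNReal.ofReal (r * y * Real.exp (-(r * y * u)))) := by
    have h : IsFiniteMeasure ((expMeasure r).restrict (Set.Iic y)) := inferInstance
    rw [expMeasure_restrict_Iic hy] at h
    exact Measure.isFiniteMeasure_of_map (f := (y * ·)) (by fun_prop)
  have : SigmaFinite (uniformMeasure 1) := by
    rw [uniformMeasure_one]
    infer_instance
  have hset : {z : Fin m → ℝ | ∀ j, z j ≤ y} = Set.univ.pi fun _ => Set.Iic y := by
    ext z
    exact Set.mem_univ_pi.symm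
  have hpre : MeasurableSet ((fun u : Fin m → ℝ => fun j => y * u j) ⁻¹' B) :=
    hB.preimage (by fun_prop)
  rw [Set.inter_comm, ← Measure.restrict_apply hB, hset, iidExp, Measure.restrict_pi_pi,
    expMeasure_restrict_Iic hy, ← Measure.pi_map_pi (fun _ => by fun_prop),
    Measure.map_apply (by fun_prop) hB, pi_withDensity _ _ (fun _ => by fun_prop),
    withDensity_apply _ hpre, ← lintegral_indicator hpre]
  refine lintegral_congr fun u => ?_
  have hprod : ∏ j, ENNReal.ofReal (r * y * Real.exp (-(r * y * u j))) =
      ENNReal.ofReal ((r * y) ^ m * Real.exp (-(r * y * ∑ j, u j))) := by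
    rw [← ENNReal.ofReal_prod_of_nonneg fun _ _ => by positivity, Finset.prod_mul_distrib,
      ← Real.exp_sum, Finset.mul_sum, ← Finset.sum_neg_distrib]
    simp
  simp only [Set.indicator, hprod]
  rfl

/-- The law of `tau` on the event that the `i`-th observation is maximal. -/
theorem iidExp_max_inter_tau {m : ℕ} {r : ℝ} (hr : 0 < r) (i : Fin (m + 1)) {A : Set ℝ}
    (hA : MeasurableSet A) :
    iidExp (m + 1) r ({x | ∀ j, x j ≤ x i} ∩ tau ⁻¹' A) =
      ∫⁻ u, ((fun u : Fin m → ℝ => (∑ j, u j + 1) / ((m + 1 : ℕ) : ℝ)) ⁻¹' A).indicator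
        (fun u => ENNReal.ofReal (m.factorial / (∑ j, u j + 1) ^ (m + 1))) u
        ∂iidUniform m 1 := by
  have := isProbabilityMeasure_expMeasure hr
  have : SFinite (iidUniform m 1) := by
    rw [iidUniform, uniformMeasure_one]
    infer_instance
  set T : Set (Fin m → ℝ) :=
    (fun u : Fin m → ℝ => (∑ j, u j + 1) / ((m + 1 : ℕ) : ℝ)) ⁻¹' A with hT_def
  have hT : MeasurableSet T := hA.preimage (by fun_prop)
  let g : ℝ × (Fin m → ℝ) → ℝ := fun p => (p.1 + ∑ j, p.2 j) / ((m + 1 : ℕ) : ℝ) / p.1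
  have hg : Measurable g := by fun_prop
  let S : Set (ℝ × (Fin m → ℝ)) := {p | ∀ j, p.2 j ≤ p.1} ∩ g ⁻¹' A
  have hS : MeasurableSet S := by
    refine MeasurableSet.inter ?_ (hA.preimage hg)
    simp only [Set.ofPred_forall]
    exact MeasurableSet.iInter fun j => measurableSet_le (by fun_prop) (by fun_prop)
  have hpre : {x : Fin (m + 1) → ℝ | ∀ j, x j ≤ x i} ∩ tau ⁻¹' A =
      MeasurableEquiv.piFinSuccAbove (fun _ => ℝ) i ⁻¹' S := by
    ext x
    have hle : (∀ j, x j ≤ x i) ↔ ∀ k, x (i.succAbove k) ≤ x i := by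
      rw [Fin.forall_iff_succAbove i]
      simp
    have htau : (∀ j, x j ≤ x i) → tau x = g (x i, fun k => x (i.succAbove k)) := fun h => by
      simp only [tau, sampleMax_eq h, sampleMean, Fin.sum_univ_succAbove _ i, g]
    change ((∀ j, x j ≤ x i) ∧ tau x ∈ A) ↔
      ((∀ k, x (i.succAbove k) ≤ x i) ∧ g (x i, fun k => x (i.succAbove k)) ∈ A)
    rw [← hle]
    exact and_congr_right fun h => by rw [htau h]
  have hslice : ∀ y : ℝ, y ≠ 0 →
      exponentialPDF r y * iidExp m r (Prod.mk y ⁻¹' S) =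
        ∫⁻ u, T.indicator (fun u => exponentialPDF r y *
          ENNReal.ofReal ((r * y) ^ m * Real.exp (-(r * y * ∑ j, u j)))) u ∂iidUniform m 1 := by
    intro y hy0
    rcases lt_or_gt_of_ne hy0 with hy | hy
    · simp [exponentialPDF_of_neg hy]
    · have hB : MeasurableSet ((fun z => g (y, z)) ⁻¹' A) := hA.preimage (by fun_prop)
      have hsplit : Prod.mk y ⁻¹' S = {z | ∀ j, z j ≤ y} ∩ ((fun z => g (y, z)) ⁻¹' A) := rfl
      have hscale : (fun u : Fin m → ℝ => y • u) ⁻¹' ((fun z => g (y, z)) ⁻¹' A) = T := by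
        ext u
        have : g (y, y • u) = (∑ j, u j + 1) / ((m + 1 : ℕ) : ℝ) := by
          simp only [g, Pi.smul_apply, smul_eq_mul, ← Finset.mul_sum]
          field_simp
          ring
        simp only [Set.mem_preimage, this, hT_def]
      rw [hsplit, iidExp_restrict_le hr hy hB, hscale,
        ← lintegral_const_mul' (exponentialPDF r y) _ ENNReal.ofReal_ne_top]
      refine lintegral_congr fun u => ?_
      by_cases hu : u ∈ T <;> simp [hu]
  have hpdf : Measurable (exponentialPDF r) := (measurable_exponentialPDFReal r).ennreal_ofReal
  rw [hpre, iidExp, (measurePreserving_piFinSuccAbove (fun _ => expMeasure r) i).measure_preimage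
    hS.nullMeasurableSet, Measure.prod_apply hS]
  change ∫⁻ y, iidExp m r (Prod.mk y ⁻¹' S) ∂volume.withDensity (exponentialPDF r) = _
  have hslice_meas : Measurable fun y => iidExp m r (Prod.mk y ⁻¹' S) := by
    have : SFinite (iidExp m r) := by
      rw [iidExp]
      infer_instance
    exact measurable_measure_prodMk_left hS
  rw [lintegral_withDensity_eq_lintegral_mul _ hpdf hslice_meas]
  have hne : ∀ᵐ y : ℝ, y ≠ 0 := by
    simp [ae_iff]
  have hjoint : Measurable fun p : ℝ × (Fin m → ℝ) => T.indicator (fun u => exponentialPDF r p.1 *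
      ENNReal.ofReal ((r * p.1) ^ m * Real.exp (-(r * p.1 * ∑ j, u j)))) p.2 := by
    have : Measurable fun p : ℝ × (Fin m → ℝ) => exponentialPDF r p.1 *
        ENNReal.ofReal ((r * p.1) ^ m * Real.exp (-(r * p.1 * ∑ j, p.2 j))) := by fun_prop
    exact this.indicator (hT.preimage measurable_snd)
  simp only [Pi.mul_apply]
  rw [lintegral_congr_ae (hne.mono hslice), lintegral_lintegral_swap hjoint.aemeasurable]
  refine lintegral_congr_ae ?_
  filter_upwards [ae_mem_Icc_iidUniform m] with u hu
  by_cases huT : u ∈ T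
  · simp only [Set.indicator_of_mem huT]
    have hpos : 0 < ∑ j, u j + 1 := by
      have : 0 ≤ ∑ j, u j := Finset.sum_nonneg fun j _ => (hu j).1
      positivity
    rw [← lintegral_exp_mul_pow hr hpos, add_sub_cancel_right]
  · simp [Set.indicator_of_notMem huT]

/-- The law of `tau` for exponential observations, as an integral over the unit cube. -/
theorem iidExp_tau_preimage {m : ℕ} {r : ℝ} (hr : 0 < r) {A : Set ℝ} (hA : MeasurableSet A) :
    iidExp (m + 1) r (tau ⁻¹' A) =
      ∫⁻ u, ((fun u : Fin m → ℝ => (∑ j, u j + 1) / ((m + 1 : ℕ) : ℝ)) ⁻¹' A).indicator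
        (fun u => ENNReal.ofReal ((m + 1).factorial / (∑ j, u j + 1) ^ (m + 1))) u
        ∂iidUniform m 1 := by
  let E : Fin (m + 1) → Set (Fin (m + 1) → ℝ) := fun i => {x | ∀ j, x j ≤ x i} ∩ tau ⁻¹' A
  have hcover : tau ⁻¹' A = ⋃ i, E i := by
    rw [← Set.iUnion_inter]
    refine (Set.inter_eq_right.mpr fun x _ => ?_).symm
    obtain ⟨i, hi⟩ := Finite.exists_max x
    exact Set.mem_iUnion.mpr ⟨i, hi⟩
  have hdisj : Pairwise (Function.onFun (AEDisjoint (iidExp (m + 1) r)) E) := fun i j hij =>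
    measure_mono_null (fun x hx => le_antisymm (hx.2.1 i) (hx.1.1 j)) (iidExp_eq_null hr hij)
  have hE : ∀ i, MeasurableSet (E i) := fun i => by
    refine MeasurableSet.inter ?_ (measurable_tau hA)
    simp only [Set.ofPred_forall]
    exact MeasurableSet.iInter fun j => measurableSet_le (by fun_prop) (by fun_prop)
  rw [hcover, measure_iUnion₀ hdisj fun i => (hE i).nullMeasurableSet, tsum_fintype]
  simp only [E, iidExp_max_inter_tau hr _ hA, Finset.sum_const, Finset.card_univ, Fintype.card_fin,
    nsmul_eq_mul]
  rw [← lintegral_const_mul' _ _ (by simp)]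
  refine lintegral_congr fun u => ?_
  classical
  simp only [Set.indicator_apply]
  split_ifs
  · rw [← ENNReal.ofReal_natCast, ← ENNReal.ofReal_mul (by positivity), Nat.factorial_succ]
    push_cast
    ring_nf
  · simp

theorem lintegral_eq_ofReal_mul_lintegral_comp_add_one_div {n : ℝ} (hn : 0 < n)
    (f : ℝ → ENNReal) :
    ∫⁻ t, f t = ENNReal.ofReal n⁻¹ * ∫⁻ s, f ((s + 1) / n) := by
  rw [lintegral_eq_ofReal_mul_lintegral_comp_mul_left (inv_pos.mpr hn),
    ← lintegral_add_right_eq_self _ 1]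
  simp only [div_eq_inv_mul]

/-- Under an i.i.d. `Exponential(λ)` sample, `τ_n` has density
`t ↦ (n!/n^{n-1}) · I_{n-1}(n·t − 1) / t^n` on `[1/n, 1]`, where `I_{n-1}` is the
Irwin–Hall density with parameter `n − 1`. -/
theorem tau_density_exponential
    (n : ℕ) (hn : 2 ≤ n) (lam : ℝ) (hlam : 0 < lam)
    (I : ℝ → ℝ)
    (hI : irwinHall (n - 1) = volume.withDensity fun s => ENNReal.ofReal (I s)) :
    (iidExp n lam).map tau =
      volume.withDensity fun t =>
        ENNReal.ofReal
          (if t ∈ Set.Icc ((n : ℝ)⁻¹) 1 then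
            (Nat.factorial n : ℝ) / (n : ℝ) ^ (n - 1) * I ((n : ℝ) * t - 1) / t ^ n
          else 0) := by
  classical
  obtain ⟨m, rfl⟩ : ∃ m, n = m + 1 := ⟨n - 1, by omega⟩
  simp only [Nat.add_sub_cancel] at hI ⊢
  have hn0 : (0 : ℝ) < ((m + 1 : ℕ) : ℝ) := by positivity
  set N : ℝ := ((m + 1 : ℕ) : ℝ) with hN
  have hNm : N = m + 1 := by rw [hN]; push_cast; rfl
  ext A hA
  let G : ℝ → ENNReal := ((fun s : ℝ => (s + 1) / N) ⁻¹' A ∩ Set.Icc 0 (m : ℝ)).indicator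
    fun s => ENNReal.ofReal ((m + 1).factorial / (s + 1) ^ (m + 1))
  have hG : Measurable G := by
    refine Measurable.indicator (by fun_prop) (MeasurableSet.inter ?_ measurableSet_Icc)
    exact hA.preimage (by fun_prop)
  have hGfin : ∀ s, G s ≠ ⊤ := fun s => by
    simp only [G, Set.indicator_apply]
    split_ifs <;> simp
  have hlhs : (iidExp (m + 1) lam).map tau A = ∫⁻ s, G s ∂irwinHall m := by
    rw [Measure.map_apply measurable_tau hA, iidExp_tau_preimage hlam hA, irwinHall,
      lintegral_map hG (by fun_prop)]
    refine lintegral_congr_ae ?_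
    filter_upwards [ae_mem_Icc_iidUniform m] with u hu
    have h0 : 0 ≤ ∑ j, u j := Finset.sum_nonneg fun j _ => (hu j).1
    have h1 : ∑ j, u j ≤ m := by
      simpa using Finset.sum_le_sum fun j (_ : j ∈ Finset.univ) => (hu j).2
    simp only [G, Set.indicator_apply, Set.mem_inter_iff, Set.mem_Icc, Set.mem_preimage, h0, h1,
      and_true, hN]
  rw [hlhs, hI, lintegral_withDensity_of_measurable _ _ hG hGfin, withDensity_apply _ hA,
    ← lintegral_indicator hA, lintegral_eq_ofReal_mul_lintegral_comp_add_one_div hn0 (A.indicator _),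
    ← lintegral_const_mul' _ _ ENNReal.ofReal_ne_top]
  refine lintegral_congr fun s => ?_
  have hmem : (s + 1) / N ∈ Set.Icc N⁻¹ 1 ↔ s ∈ Set.Icc 0 (m : ℝ) := by
    rw [Set.mem_Icc, Set.mem_Icc, div_le_one hn0, inv_eq_one_div, div_le_div_iff_of_pos_right hn0,
      hNm]
    constructor <;> rintro ⟨h, h'⟩ <;> constructor <;> linarith
  simp only [G, Set.indicator_apply, Set.mem_inter_iff, Set.mem_preimage, hmem]
  by_cases hsA : (s + 1) / N ∈ A
  · by_cases hs : s ∈ Set.Icc 0 (m : ℝ)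
    · have hs1 : 0 < s + 1 := by linarith [hs.1]
      simp only [hsA, hs, and_self, if_true]
      rw [← ENNReal.ofReal_mul (by positivity), ← ENNReal.ofReal_mul (by positivity),
        mul_div_cancel₀ _ hn0.ne', add_sub_cancel_right, div_pow]
      congr 1
      field_simp
      ring
    · simp [hs]
  · simp [hsA]
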